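/- Let S be an ordered semigroup satisfying axioms O1–O6. Then any two functionals λ₁, λ₂ on S have a least upper bound λ₁ ∨ λ₂ in F(S) with respect to the pointwise order. -/

import Mathlib

open scoped ENNReal

/-- `CC s t` : `s` is (sequentially) compactly contained in `t`, written `s ≪ t`. -/
def CC {S : Type*} [AddCommMonoid S] [PartialOrder S] (s t : S) : Prop :=
  ∀ u : ℕ → S, Monotone u → ∀ x : S, IsLUB (Set.range u) x → t ≤ x → ∃ n, s ≤ u n

/-- An ordered semigroup (positive, with translation invariant order) satisfying axioms O1-O5. -/
structure CuO5 (S : Type*) [AddCommMonoid S] [PartialOrder S] : Prop where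
  addRightMono : ∀ {s t : S}, s ≤ t → ∀ r : S, s + r ≤ t + r
  zeroLe : ∀ s : S, 0 ≤ s
  O1 : ∀ u : ℕ → S, Monotone u → ∃ x : S, IsLUB (Set.range u) x
  O2 : ∀ s : S, ∃ u : ℕ → S, (∀ n, CC (u n) (u (n + 1))) ∧ IsLUB (Set.range u) s
  O3 : ∀ {s₁ t₁ s₂ t₂ : S}, CC s₁ t₁ → CC s₂ t₂ → CC (s₁ + s₂) (t₁ + t₂)
  O4 : ∀ u v : ℕ → S, Monotone u → Monotone v → ∀ x y : S,
    IsLUB (Set.range u) x → IsLUB (Set.range v) y →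
    IsLUB (Set.range fun n => u n + v n) (x + y)
  O5 : ∀ {s' s t : S}, CC s' s → s ≤ t → ∃ r : S, s' + r ≤ t ∧ t ≤ s + r

/-- Axioms O1-O6. -/
structure CuO6 (S : Type*) [AddCommMonoid S] [PartialOrder S] extends CuO5 S : Prop where
  O6 : ∀ {s r t : S}, s ≤ r + t → ∀ {s' : S}, CC s' s →
    ∃ r' t' : S, s' ≤ r' + t' ∧ r' ≤ r ∧ r' ≤ s ∧ t' ≤ t ∧ t' ≤ s

/-- A functional on `S`: additive, order preserving, zero preserving map to `[0,∞]`
preserving suprema of increasing sequences. -/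
structure IsFunctional {S : Type*} [AddCommMonoid S] [PartialOrder S] (l : S → ℝ≥0∞) : Prop where
  map_zero : l 0 = 0
  map_add : ∀ s t : S, l (s + t) = l s + l t
  mono : ∀ {s t : S}, s ≤ t → l s ≤ l t
  map_sup : ∀ u : ℕ → S, Monotone u → ∀ x : S, IsLUB (Set.range u) x → l x = ⨆ n, l (u n)

/-- Real multiplication on `S` : a map `(0,∞] × S → S` additive, order preserving and
sup-(of increasing sequences)-preserving in each variable, with `1 · s = s`.
Scalars are elements of `ℝ≥0∞` required to be positive. -/
structure RealMul (S : Type*) [AddCommMonoid S] [PartialOrder S] where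
  smul : ℝ≥0∞ → S → S
  add_left : ∀ {a b : ℝ≥0∞}, 0 < a → 0 < b → ∀ s : S, smul (a + b) s = smul a s + smul b s
  add_right : ∀ {a : ℝ≥0∞}, 0 < a → ∀ s t : S, smul a (s + t) = smul a s + smul a t
  mono_left : ∀ {a b : ℝ≥0∞}, 0 < a → a ≤ b → ∀ s : S, smul a s ≤ smul b s
  mono_right : ∀ {a : ℝ≥0∞}, 0 < a → ∀ {s t : S}, s ≤ t → smul a s ≤ smul a t
  sup_left : ∀ u : ℕ → ℝ≥0∞, Monotone u → 0 < u 0 → ∀ s : S,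
    IsLUB (Set.range fun n => smul (u n) s) (smul (⨆ n, u n) s)
  sup_right : ∀ {a : ℝ≥0∞}, 0 < a → ∀ u : ℕ → S, Monotone u → ∀ x : S,
    IsLUB (Set.range u) x → IsLUB (Set.range fun n => smul a (u n)) (smul a x)
  one_smul : ∀ s : S, smul 1 s = s

/-- `D` is a dense subset of `S`: every element of `S` is the supremum of a rapidly
increasing sequence of elements of `D`. -/
def IsDenseSub {S : Type*} [AddCommMonoid S] [PartialOrder S] (D : Set S) : Prop :=
  ∀ s : S, ∃ u : ℕ → S, (∀ n, u n ∈ D) ∧ (∀ n, CC (u n) (u (n + 1))) ∧ IsLUB (Set.range u) s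

/-- `m` is the least upper bound of the functionals `l₁` and `l₂` in `F(S)`
(pointwise order). -/
def IsFSup {S : Type*} [AddCommMonoid S] [PartialOrder S] (l₁ l₂ m : S → ℝ≥0∞) : Prop :=
  IsFunctional m ∧ (∀ s, l₁ s ≤ m s) ∧ (∀ s, l₂ s ≤ m s) ∧
    ∀ d : S → ℝ≥0∞, IsFunctional d → (∀ s, l₁ s ≤ d s) → (∀ s, l₂ s ≤ d s) → ∀ s, m s ≤ d s

/-- `m` is the greatest lower bound of the functionals `l₁` and `l₂` in `F(S)`
(pointwise order). -/
def IsFInf {S : Type*} [AddCommMonoid S] [PartialOrder S] (l₁ l₂ m : S → ℝ≥0∞) : Prop :=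
  IsFunctional m ∧ (∀ s, m s ≤ l₁ s) ∧ (∀ s, m s ≤ l₂ s) ∧
    ∀ d : S → ℝ≥0∞, IsFunctional d → (∀ s, d s ≤ l₁ s) → (∀ s, d s ≤ l₂ s) → ∀ s, d s ≤ m s

/-- An isomorphism of ordered semigroups between `S` and the extended natural numbers. -/
def IsOrdSemigroupIso {S : Type*} [AddCommMonoid S] [PartialOrder S] (e : S ≃ ℕ∞) : Prop :=
  (∀ a b : S, e (a + b) = e a + e b) ∧ e 0 = 0 ∧ ∀ a b : S, a ≤ b ↔ e a ≤ e b

section OrderedSemigroup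

variable {S : Type*} [AddCommMonoid S] [PartialOrder S]

theorem CC.le {s t : S} (h : CC s t) : s ≤ t := by
  obtain ⟨_, hn⟩ := h (fun _ => t) monotone_const t (by simp [isLUB_singleton]) le_rfl
  exact hn

theorem CC.trans_le {s t r : S} (h : CC s t) (htr : t ≤ r) : CC s r :=
  fun u hu x hx hrx => h u hu x hx (htr.trans hrx)

theorem CuO5.isOrderedAddMonoid (hS : CuO5 S) : IsOrderedAddMonoid S where
  add_le_add_left _ _ h c := hS.addRightMono h c

theorem CuO5.isLUB_nsmul (hS : CuO5 S) {u : ℕ → S} (hu : Monotone u) {x : S}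
    (hx : IsLUB (Set.range u) x) (n : ℕ) : IsLUB (Set.range fun i => n • u i) (n • x) := by
  have := hS.isOrderedAddMonoid
  induction n with
  | zero => simp [isLUB_singleton]
  | succ n ih =>
    simp only [succ_nsmul]
    exact hS.O4 _ _ (fun i j hij => nsmul_le_nsmul_right (hu hij) n) hu _ _ ih hx

namespace IsFunctional

variable {l : S → ℝ≥0∞}

theorem map_nsmul (hl : IsFunctional l) (n : ℕ) (s : S) : l (n • s) = n * l s := by
  induction n with
  | zero => simp [hl.map_zero]
  | succ n ih => rw [succ_nsmul, hl.map_add, ih]; push_cast; ring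

/-- A functional is approximated from below along chains of compact containment. -/
theorem exists_cc_cc (hl : IsFunctional l) (hS : CuO5 S) {s : S} (hs : l s ≠ ∞) {ε : ℝ≥0∞}
    (hε : ε ≠ 0) : ∃ s' s'' : S, CC s'' s' ∧ CC s' s ∧ l s ≤ l s'' + ε := by
  obtain ⟨u, hu, hlub⟩ := hS.O2 s
  have hmono : Monotone u := monotone_nat_of_le_succ fun n => (hu n).le
  have hsup := hl.map_sup u hmono s hlub
  have : ∃ n, l s ≤ l (u n) + ε := by
    by_contra! h
    have h' : ∀ n, l (u n) ≤ l s - ε := fun n => ENNReal.le_sub_of_add_le_right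
      (fun hε' => by simpa [hε'] using h n) (h n).le
    have h0 : l s ≤ l s - ε := hsup.le.trans (iSup_le h')
    have hpos : l s ≠ 0 := fun h0 => by simpa [h0] using h 0
    exact (ENNReal.sub_lt_self hs hpos hε).not_ge h0
  obtain ⟨n, hn⟩ := this
  exact ⟨u (n + 1), u n, hu n, (hu (n + 1)).trans_le (hlub.1 ⟨_, rfl⟩), hn⟩

/-- An element of finite value exceeds a compactly contained one by arbitrarily little. -/
theorem exists_cc_le_add (hl : IsFunctional l) (hS : CuO5 S) {s : S} (hs : l s ≠ ∞) {ε : ℝ≥0∞}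
    (hε : ε ≠ 0) : ∃ s' e : S, CC s' s ∧ s ≤ s' + e ∧ l e ≤ ε ∧ l s ≤ l s' + ε := by
  obtain ⟨s', s'', h₁, h₂, h₃⟩ := hl.exists_cc_cc hS hs hε
  obtain ⟨e, he₁, he₂⟩ := hS.O5 h₁ h₂.le
  have hs'' : l s'' ≠ ∞ := ne_top_of_le_ne_top hs (hl.mono (h₁.le.trans h₂.le))
  refine ⟨s', e, h₂, he₂, ?_, h₃.trans (by gcongr; exact hl.mono h₁.le)⟩
  have := (hl.mono he₁).trans h₃
  rw [hl.map_add] at this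
  exact (ENNReal.add_le_add_iff_left hs'').1 this

/-- Riesz decomposition, up to scaling and up to an error measured by a functional. -/
theorem exists_riesz_decomposition (hl : IsFunctional l) (hS : CuO6 S) {a s t : S}
    (ha : l a ≠ ∞) (hast : a ≤ s + t) {ε : ℝ≥0∞} (hε : ε ≠ 0) :
    ∃ (n : ℕ) (x y : S), n ≠ 0 ∧ x ≤ n • s ∧ y ≤ n • t ∧ x + y ≤ n • a ∧
      n * l a ≤ l x + l y + n * (5 * ε) := by
  have := hS.isOrderedAddMonoid
  obtain ⟨a', e, haa', hae, hle, -⟩ := hl.exists_cc_le_add hS.toCuO5 ha hε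
  obtain ⟨a₁, a₂, ha', ha₁s, ha₁a, ha₂t, -⟩ := hS.O6 hast haa'
  obtain ⟨c, f, hc, hcf, hlf, hlc⟩ :=
    hl.exists_cc_le_add hS.toCuO5 (ne_top_of_le_ne_top ha (hl.mono ha₁a)) hε
  obtain ⟨r, hr₁, hr₂⟩ := hS.O5 hc ha₁a
  have hca : c ≤ a := hc.le.trans ha₁a
  have hra : r ≤ a := (le_add_of_nonneg_left (hS.zeroLe c)).trans hr₁
  have hstep : r + c ≤ (t + (e + f)) + c := calc
    r + c = c + r := add_comm _ _
    _ ≤ a := hr₁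
    _ ≤ a₁ + a₂ + e := hae.trans (by gcongr)
    _ ≤ (c + f) + t + e := by gcongr
    _ = (t + (e + f)) + c := by abel
  have hiter (n : ℕ) : n • r + c ≤ n • (t + (e + f)) + c := by
    induction n with
    | zero => simp
    | succ n ih => calc
        (n + 1) • r + c = r + (n • r + c) := by rw [succ_nsmul]; abel
        _ ≤ r + (n • (t + (e + f)) + c) := by gcongr
        _ = n • (t + (e + f)) + (r + c) := by abel
        _ ≤ n • (t + (e + f)) + ((t + (e + f)) + c) := by gcongr
        _ = (n + 1) • (t + (e + f)) + c := by rw [succ_nsmul]; abel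
  obtain ⟨n, hn0, hn⟩ : ∃ n : ℕ, n ≠ 0 ∧ l a ≤ n * ε := by
    obtain ⟨n, hn⟩ := ENNReal.exists_nat_mul_gt hε ha
    exact ⟨n, fun h => by simp [h] at hn, hn.le⟩
  have hnr : n • r ≤ n • t + (n • (e + f) + c) := by
    refine (le_add_of_nonneg_right (hS.zeroLe c)).trans ((hiter n).trans ?_)
    rw [nsmul_add, add_assoc]
  have hlr : l (n • r) ≠ ∞ := by
    rw [hl.map_nsmul]
    exact ENNReal.mul_ne_top (ENNReal.natCast_ne_top n) (ne_top_of_le_ne_top ha (hl.mono hra))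
  obtain ⟨r', _, hr', -, -, hlr'⟩ := hl.exists_cc_le_add hS.toCuO5 hlr hε
  obtain ⟨y, w, hyw, hyt, hyr, hw, -⟩ := hS.O6 hnr hr'
  refine ⟨n, n • c, y, hn0, nsmul_le_nsmul_right (hc.le.trans ha₁s) n, hyt, ?_, ?_⟩
  · calc n • c + y ≤ n • c + n • r := by gcongr
      _ = n • (c + r) := (nsmul_add _ _ _).symm
      _ ≤ n • a := nsmul_le_nsmul_right hr₁ n
  · have hlw : l w ≤ n * (ε + ε) + n * ε := by
      refine (hl.mono hw).trans ?_
      rw [hl.map_add, hl.map_nsmul, hl.map_add]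
      gcongr
      exact (hl.mono hca).trans hn
    have h1n : ε ≤ n * ε := le_mul_of_one_le_left zero_le
      (by exact_mod_cast Nat.one_le_iff_ne_zero.2 hn0)
    calc n * l a ≤ n * (l a₁ + l r) := by
          gcongr; rw [← hl.map_add]; exact hl.mono hr₂
      _ ≤ n * ((l c + ε) + l r) := by gcongr
      _ = n * l c + n * ε + l (n • r) := by rw [hl.map_nsmul]; ring
      _ ≤ n * l c + n * ε + (l (y + w) + n * ε) := by
          gcongr; exact hlr'.trans (by gcongr; exact hl.mono hyw)
      _ ≤ n * l c + n * ε + (l y + (n * (ε + ε) + n * ε) + n * ε) := by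
          rw [hl.map_add]; gcongr
      _ = l (n • c) + l y + n * (5 * ε) := by rw [hl.map_nsmul]; ring

end IsFunctional

/-- The supremum of `(l₁ a + l₂ b) / n` over all `n ≥ 1` and all `a, b` with `a + b ≤ n • s`. -/
noncomputable def functionalSup (l₁ l₂ : S → ℝ≥0∞) (s : S) : ℝ≥0∞ :=
  ⨆ p : {p : ℕ × S × S // p.1 ≠ 0 ∧ p.2.1 + p.2.2 ≤ p.1 • s},
    (l₁ p.1.2.1 + l₂ p.1.2.2) / p.1.1

theorem functionalSup_le_iff {l₁ l₂ : S → ℝ≥0∞} {s : S} {c : ℝ≥0∞} :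
    functionalSup l₁ l₂ s ≤ c ↔
      ∀ (n : ℕ) (a b : S), n ≠ 0 → a + b ≤ n • s → l₁ a + l₂ b ≤ n * c := by
  have key (n : ℕ) (hn : n ≠ 0) (x : ℝ≥0∞) : x / n ≤ c ↔ x ≤ n * c := by
    rw [ENNReal.div_le_iff (by exact_mod_cast hn) (ENNReal.natCast_ne_top n), mul_comm]
  constructor
  · intro h n a b hn hab
    exact (key n hn _).1 ((le_iSup_of_le ⟨(n, a, b), hn, hab⟩ le_rfl).trans h)
  · intro h
    exact iSup_le fun ⟨⟨n, a, b⟩, hn, hab⟩ => (key n hn _).2 (h n a b hn hab)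

theorem add_le_mul_functionalSup (l₁ l₂ : S → ℝ≥0∞) {s a b : S} {n : ℕ} (hn : n ≠ 0)
    (h : a + b ≤ n • s) : l₁ a + l₂ b ≤ n * functionalSup l₁ l₂ s :=
  functionalSup_le_iff.1 le_rfl n a b hn h

theorem functionalSup_mono (hS : CuO5 S) (l₁ l₂ : S → ℝ≥0∞) {s t : S} (hst : s ≤ t) :
    functionalSup l₁ l₂ s ≤ functionalSup l₁ l₂ t := by
  have := hS.isOrderedAddMonoid
  exact functionalSup_le_iff.2 fun n a b hn hab =>
    add_le_mul_functionalSup l₁ l₂ hn (hab.trans (nsmul_le_nsmul_right hst n))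

variable {l₁ l₂ : S → ℝ≥0∞}

theorem left_le_functionalSup (h₂ : IsFunctional l₂) (s : S) : l₁ s ≤ functionalSup l₁ l₂ s := by
  simpa [h₂.map_zero] using
    add_le_mul_functionalSup l₁ l₂ (s := s) (a := s) (b := 0) one_ne_zero (by simp)

theorem right_le_functionalSup (h₁ : IsFunctional l₁) (s : S) : l₂ s ≤ functionalSup l₁ l₂ s := by
  simpa [h₁.map_zero] using
    add_le_mul_functionalSup l₁ l₂ (s := s) (a := 0) (b := s) one_ne_zero (by simp)

theorem functionalSup_le {d : S → ℝ≥0∞} (hd : IsFunctional d) (h₁ : ∀ s, l₁ s ≤ d s)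
    (h₂ : ∀ s, l₂ s ≤ d s) (s : S) : functionalSup l₁ l₂ s ≤ d s :=
  functionalSup_le_iff.2 fun n a b _ hab => calc
    l₁ a + l₂ b ≤ d a + d b := add_le_add (h₁ a) (h₂ b)
    _ = d (a + b) := (hd.map_add a b).symm
    _ ≤ d (n • s) := hd.mono hab
    _ = n * d s := hd.map_nsmul n s

theorem functionalSup_zero (hS : CuO5 S) (h₁ : IsFunctional l₁) (h₂ : IsFunctional l₂) :
    functionalSup l₁ l₂ 0 = 0 := by
  have := hS.isOrderedAddMonoid
  refine le_antisymm (functionalSup_le_iff.2 fun n a b _ hab => ?_) zero_le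
  rw [nsmul_zero] at hab
  have ha : a = 0 :=
    le_antisymm ((le_add_of_nonneg_right (hS.zeroLe b)).trans hab) (hS.zeroLe a)
  have hb : b = 0 :=
    le_antisymm ((le_add_of_nonneg_left (hS.zeroLe a)).trans hab) (hS.zeroLe b)
  simp [ha, hb, h₁.map_zero, h₂.map_zero]

theorem functionalSup_isLUB (hS : CuO5 S) (h₁ : IsFunctional l₁) (h₂ : IsFunctional l₂)
    {u : ℕ → S} (hu : Monotone u) {x : S} (hx : IsLUB (Set.range u) x) :
    functionalSup l₁ l₂ x = ⨆ i, functionalSup l₁ l₂ (u i) := by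
  have := hS.isOrderedAddMonoid
  refine le_antisymm (functionalSup_le_iff.2 fun n a b hn hab => ?_)
    (iSup_le fun i => functionalSup_mono hS l₁ l₂ (hx.1 ⟨i, rfl⟩))
  obtain ⟨v, hv, hva⟩ := hS.O2 a
  obtain ⟨w, hw, hwb⟩ := hS.O2 b
  have hvm : Monotone v := monotone_nat_of_le_succ fun i => (hv i).le
  have hwm : Monotone w := monotone_nat_of_le_succ fun i => (hw i).le
  rw [h₁.map_sup v hvm a hva, h₂.map_sup w hwm b hwb,
    ENNReal.iSup_add_iSup_of_monotone (fun _ _ h => h₁.mono (hvm h))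
      (fun _ _ h => h₂.mono (hwm h))]
  refine iSup_le fun i => ?_
  obtain ⟨j, hj⟩ := hS.O3 (hv i) (hw i) _ (fun _ _ h => nsmul_le_nsmul_right (hu h) n) _
    (hS.isLUB_nsmul hu hx n)
    ((add_le_add (hva.1 ⟨i + 1, rfl⟩) (hwb.1 ⟨i + 1, rfl⟩)).trans hab)
  refine (add_le_mul_functionalSup l₁ l₂ hn hj).trans ?_
  gcongr
  exact le_iSup (fun i => functionalSup l₁ l₂ (u i)) j

theorem functionalSup_superadditive (hS : CuO5 S) (h₁ : IsFunctional l₁) (h₂ : IsFunctional l₂)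
    (s t : S) : functionalSup l₁ l₂ s + functionalSup l₁ l₂ t ≤ functionalSup l₁ l₂ (s + t) := by
  have := hS.isOrderedAddMonoid
  have hne (r : S) : Nonempty {p : ℕ × S × S // p.1 ≠ 0 ∧ p.2.1 + p.2.2 ≤ p.1 • r} :=
    ⟨⟨(1, 0, 0), one_ne_zero, by simpa using hS.zeroLe r⟩⟩
  have := hne s
  have := hne t
  refine ENNReal.iSup_add_iSup_le ?_
  rintro ⟨⟨n, a, b⟩, hn, hab⟩ ⟨⟨k, c, d⟩, hk, hcd⟩
  dsimp only at hn hab hk hcd ⊢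
  have hle : (k • a + n • c) + (k • b + n • d) ≤ (n * k) • (s + t) := calc
    (k • a + n • c) + (k • b + n • d) = k • (a + b) + n • (c + d) := by
      simp only [nsmul_add]; abel
    _ ≤ k • n • s + n • k • t := by gcongr
    _ = (n * k) • (s + t) := by
      rw [nsmul_add, mul_nsmul, mul_nsmul']
  have h := add_le_mul_functionalSup l₁ l₂ (mul_ne_zero hn hk) hle
  have hn' : (n : ℝ≥0∞) ≠ 0 := by exact_mod_cast hn
  have hk' : (k : ℝ≥0∞) ≠ 0 := by exact_mod_cast hk
  have hnt : (n : ℝ≥0∞) ≠ ∞ := ENNReal.natCast_ne_top n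
  have hkt : (k : ℝ≥0∞) ≠ ∞ := ENNReal.natCast_ne_top k
  rw [← ENNReal.mul_le_mul_iff_right (mul_ne_zero hn' hk') (ENNReal.mul_ne_top hnt hkt)]
  calc (n * k : ℝ≥0∞) * ((l₁ a + l₂ b) / n + (l₁ c + l₂ d) / k)
      = k * (n * ((l₁ a + l₂ b) / n)) + n * (k * ((l₁ c + l₂ d) / k)) := by ring
    _ = k * (l₁ a + l₂ b) + n * (l₁ c + l₂ d) := by
      rw [ENNReal.mul_div_cancel hn' hnt, ENNReal.mul_div_cancel hk' hkt]
    _ = l₁ (k • a + n • c) + l₂ (k • b + n • d) := by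
      simp only [h₁.map_add, h₂.map_add, h₁.map_nsmul, h₂.map_nsmul]; ring
    _ ≤ n * k * functionalSup l₁ l₂ (s + t) := by exact_mod_cast h

theorem add_le_functionalSup_add (hS : CuO6 S) (h₁ : IsFunctional l₁) (h₂ : IsFunctional l₂)
    {a b s t : S} (hab : a + b ≤ s + t) :
    l₁ a + l₂ b ≤ functionalSup l₁ l₂ s + functionalSup l₁ l₂ t := by
  have := hS.isOrderedAddMonoid
  set M := functionalSup l₁ l₂ s + functionalSup l₁ l₂ t with hM
  by_cases hfin : M = ∞
  · simp [hfin]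
  have ha : a ≤ s + t := (le_add_of_nonneg_right (hS.zeroLe b)).trans hab
  have ha₁ : l₁ a ≠ ∞ := ne_top_of_le_ne_top hfin <| (h₁.mono ha).trans <| by
    rw [h₁.map_add]
    exact add_le_add (left_le_functionalSup h₂ s) (left_le_functionalSup h₂ t)
  have ha₂ : l₂ a ≠ ∞ := ne_top_of_le_ne_top hfin <| (h₂.mono ha).trans <| by
    rw [h₂.map_add]
    exact add_le_add (right_le_functionalSup h₁ s) (right_le_functionalSup h₁ t)
  refine ENNReal.le_of_forall_pos_le_add fun δ hδ _ => ?_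
  obtain ⟨ε, hε, hεδ⟩ : ∃ ε : ℝ≥0∞, ε ≠ 0 ∧ 7 * ε = δ := by
    refine ⟨δ / 7, ?_, ENNReal.mul_div_cancel (by norm_num) (by norm_num)⟩
    simp [hδ.ne', ENNReal.div_eq_zero_iff]
  obtain ⟨n, x, y, hn, hxs, hyt, hxy, hl⟩ := h₁.exists_riesz_decomposition hS ha₁ ha hε
  have hn' : (n : ℝ≥0∞) ≠ 0 := by exact_mod_cast hn
  have hnt : (n : ℝ≥0∞) ≠ ∞ := ENNReal.natCast_ne_top n
  have hna₁ : l₁ (n • a) ≠ ∞ := by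
    rw [h₁.map_nsmul]; exact ENNReal.mul_ne_top hnt ha₁
  have hna₂ : l₂ (n • a) ≠ ∞ := by
    rw [h₂.map_nsmul]; exact ENNReal.mul_ne_top hnt ha₂
  have hxfin : l₁ x ≠ ∞ := ne_top_of_le_ne_top hna₁
    (h₁.mono ((le_add_of_nonneg_right (hS.zeroLe y)).trans hxy))
  have hyfin : l₁ y ≠ ∞ := ne_top_of_le_ne_top hna₁
    (h₁.mono ((le_add_of_nonneg_left (hS.zeroLe x)).trans hxy))
  obtain ⟨x', _, hx', -, -, hlx⟩ := h₁.exists_cc_le_add hS.toCuO5 hxfin hε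
  obtain ⟨y', _, hy', -, -, hly⟩ := h₁.exists_cc_le_add hS.toCuO5 hyfin hε
  obtain ⟨p, hp₁, hp₂⟩ := hS.O5 hx' hxs
  obtain ⟨q, hq₁, hq₂⟩ := hS.O5 hy' hyt
  have hb : l₂ (n • b) ≤ l₂ p + l₂ q := by
    have hle : n • a + n • b ≤ n • a + (p + q) := calc
      n • a + n • b = n • (a + b) := (nsmul_add _ _ _).symm
      _ ≤ n • (s + t) := nsmul_le_nsmul_right hab n
      _ = n • s + n • t := nsmul_add _ _ _
      _ ≤ (x + p) + (y + q) := by gcongr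
      _ = (x + y) + (p + q) := by abel
      _ ≤ n • a + (p + q) := by gcongr
    have := h₂.mono hle
    rw [h₂.map_add, h₂.map_add, h₂.map_add] at this
    exact (ENNReal.add_le_add_iff_left hna₂).1 this
  have hs := add_le_mul_functionalSup l₁ l₂ hn hp₁
  have ht := add_le_mul_functionalSup l₁ l₂ hn hq₁
  have h1n : ε ≤ n * ε := le_mul_of_one_le_left zero_le
    (by exact_mod_cast Nat.one_le_iff_ne_zero.2 hn)
  rw [← ENNReal.mul_le_mul_iff_right hn' hnt]
  calc n * (l₁ a + l₂ b) = n * l₁ a + l₂ (n • b) := by rw [h₂.map_nsmul]; ring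
    _ ≤ ((l₁ x' + n * ε) + (l₁ y' + n * ε) + n * (5 * ε)) + (l₂ p + l₂ q) := by
      gcongr
      refine hl.trans ?_
      gcongr
      · exact hlx.trans (by gcongr)
      · exact hly.trans (by gcongr)
    _ = (l₁ x' + l₂ p) + (l₁ y' + l₂ q) + n * (7 * ε) := by ring
    _ ≤ n * functionalSup l₁ l₂ s + n * functionalSup l₁ l₂ t + n * (7 * ε) := by gcongr
    _ = n * (M + δ) := by rw [hεδ, hM]; ring

theorem functionalSup_nsmul_le (n : ℕ) (hn : n ≠ 0) (s : S) :
    functionalSup l₁ l₂ (n • s) ≤ n * functionalSup l₁ l₂ s := by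
  refine functionalSup_le_iff.2 fun k a b hk hab => ?_
  rw [← mul_nsmul'] at hab
  have := add_le_mul_functionalSup l₁ l₂ (mul_ne_zero hk hn) hab
  rwa [Nat.cast_mul, mul_assoc] at this

theorem isFunctional_functionalSup (hS : CuO6 S) (h₁ : IsFunctional l₁) (h₂ : IsFunctional l₂) :
    IsFunctional (functionalSup l₁ l₂) where
  map_zero := functionalSup_zero hS.toCuO5 h₁ h₂
  map_add s t := by
    refine le_antisymm (functionalSup_le_iff.2 fun n a b hn hab => ?_)
      (functionalSup_superadditive hS.toCuO5 h₁ h₂ s t)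
    rw [nsmul_add] at hab
    rw [mul_add]
    exact (add_le_functionalSup_add hS h₁ h₂ hab).trans
      (add_le_add (functionalSup_nsmul_le n hn s) (functionalSup_nsmul_le n hn t))
  mono := functionalSup_mono hS.toCuO5 l₁ l₂
  map_sup _ hu _ hx := functionalSup_isLUB hS.toCuO5 h₁ h₂ hu hx

end OrderedSemigroup

/-- any two functionals on an O1-O6 semigroup have a least upper bound in F(S). -/
theorem exists_functional_sup {S : Type*} [AddCommMonoid S] [PartialOrder S]
    (hS : CuO6 S) (l₁ l₂ : S → ℝ≥0∞) (h₁ : IsFunctional l₁) (h₂ : IsFunctional l₂) :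
    ∃ m : S → ℝ≥0∞, IsFSup l₁ l₂ m :=
  ⟨functionalSup l₁ l₂, isFunctional_functionalSup hS h₁ h₂, left_le_functionalSup h₂,
    right_le_functionalSup h₁, fun _ hd hd₁ hd₂ => functionalSup_le hd hd₁ hd₂⟩
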